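/- arXiv:0803.0917 — 5 statements merged into one kernel-verified Lean document; each statement's English description precedes it below -/
import Mathlib

section
/- Let T be a finite set of nonzero vectors of U such that ⟨u,v⟩ = 1 for all distinct u, v ∈ T. Then T has at most 5 elements (so the 5-element such sets are exactly the maximal ones). -/
/-!
Six vectors of an alternating space over `𝔽₂` that pair to `1` with each other are linearly
independent: their Gram matrix is `J + I`, whose square is `6 J + I = I`, so it is invertible.
Concretely, pairing a relation `∑ g v • v = 0` with a member `u` gives `∑ g v = g u`, so `g` is
constant, and then `g u = 6 * g u = 0`. Since `U` has dimension `4`, a set `T` as in the theorem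
has no six-element subset.
-/

/-- The symplectic vector space `U = 𝔽₂⁴`. -/
abbrev Uspace : Type := Fin 4 → ZMod 2

/-- The symplectic form on `U` with `⟨eᵢ,eⱼ⟩ = ⟨fᵢ,fⱼ⟩ = 0` and `⟨eᵢ,fⱼ⟩ = δᵢⱼ`,
where `e₁,e₂,f₁,f₂` are the standard basis vectors (coordinates `0,1,2,3`). -/
def symForm (x y : Uspace) : ZMod 2 :=
  x 0 * y 2 + x 1 * y 3 + x 2 * y 0 + x 3 * y 1

lemma symForm_self (x : Uspace) : symForm x x = 0 := by
  have h : symForm x x = 2 * (x 0 * x 2 + x 1 * x 3) := by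
    unfold symForm
    ring
  rw [h, show (2 : ZMod 2) = 0 from rfl, zero_mul]

lemma symForm_sum_smul (x : Uspace) (S : Finset Uspace) (g : Uspace → ZMod 2) :
    symForm x (∑ v ∈ S, g v • v) = ∑ v ∈ S, g v * symForm x v := by
  simp only [symForm, Finset.sum_apply, Pi.smul_apply, smul_eq_mul, Finset.mul_sum,
    ← Finset.sum_add_distrib]
  refine Finset.sum_congr rfl fun v _ => ?_
  ring

/-- The Gram matrix `J + I` is invertible when its size is even, so an even number of vectors
pairing to `1` with each other are linearly independent. -/
lemma linearIndepOn_of_pairwise_one (S : Finset Uspace) (hS : Even S.card)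
    (h1 : ∀ u ∈ S, ∀ v ∈ S, u ≠ v → symForm u v = 1) :
    LinearIndepOn (ZMod 2) id (S : Set Uspace) := by
  rw [linearIndepOn_finset_iff]
  intro g hg
  have key : ∀ u ∈ S, g u = ∑ v ∈ S, g v := by
    intro u hu
    have h : ∑ v ∈ S, g v * symForm u v = 0 := by
      rw [← symForm_sum_smul, show ∑ v ∈ S, g v • v = 0 from hg]
      simp [symForm]
    rw [← Finset.add_sum_erase S _ hu, symForm_self, mul_zero, zero_add] at h
    rw [← Finset.add_sum_erase S _ hu, left_eq_add, ← h]
    refine Finset.sum_congr rfl fun v hv => ?_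
    rw [h1 u hu v (Finset.mem_of_mem_erase hv) (Finset.ne_of_mem_erase hv).symm, mul_one]
  intro u hu
  have hcard : (S.card : ZMod 2) = 0 := (ZMod.natCast_eq_zero_iff_even).2 hS
  -- `g` is constant on `S`, so its sum is a multiple of the even number `S.card`.
  rw [key u hu, Finset.sum_congr rfl key, Finset.sum_const, nsmul_eq_mul, hcard, zero_mul]

/-- A finite set of nonzero vectors of `U` pairing to `1` under the symplectic form
has at most 5 elements. -/
theorem card_le_five_of_pairwise_one (T : Finset Uspace)
    (h0 : (0 : Uspace) ∉ T)
    (h1 : ∀ u ∈ T, ∀ v ∈ T, u ≠ v → symForm u v = 1) :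
    T.card ≤ 5 := by
  by_contra hT
  obtain ⟨S, hST, hS⟩ := Finset.exists_subset_card_eq (show 6 ≤ T.card by omega)
  have hli := linearIndepOn_of_pairwise_one S (by rw [hS]; decide)
    fun u hu v hv => h1 u (hST hu) v (hST hv)
  have hle := LinearIndependent.fintype_card_le_finrank hli
  simp [hS] at hle
end

section
/- There are exactly six pentads in U: the collection of all subsets S ⊆ U with 0 ∉ S, |S| = 5, and ⟨u,v⟩ = 1 for all distinct u, v ∈ S, has cardinality 6. -/
/-- A pentad is a set of 5 nonzero vectors of `U` pairing to `1` under the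
symplectic form. -/
def IsPentad (S : Finset Uspace) : Prop :=
  (0 : Uspace) ∉ S ∧ S.card = 5 ∧ ∀ u ∈ S, ∀ v ∈ S, u ≠ v → symForm u v = 1

/-- The only possible pentad containing two given vectors `a`, `b` with `⟨a,b⟩ = 1`: besides `a` and
`b` it consists of the vectors other than `a + b` that pair to `1` with both. -/
def pentadThrough (a b : Uspace) : Finset Uspace :=
  Finset.univ.filter fun w =>
    w = a ∨ w = b ∨ (symForm a w = 1 ∧ symForm b w = 1 ∧ w ≠ a + b)

theorem symForm_add_right (x y z : Uspace) :
    symForm x (y + z) = symForm x y + symForm x z := by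
  simp only [symForm, Pi.add_apply]
  ring

theorem isPentad_pentadThrough :
    ∀ a b : Uspace, symForm a b = 1 → IsPentad (pentadThrough a b) := by
  unfold IsPentad
  decide +kernel

theorem IsPentad.add_notMem {S : Finset Uspace} (hS : IsPentad S) {a b : Uspace}
    (ha : a ∈ S) (hb : b ∈ S) : a + b ∉ S := by
  intro hmem
  obtain ⟨-, hcard, hform⟩ := hS
  obtain ⟨c, hc, hc'⟩ : ∃ c ∈ S, c ∉ ({a, b, a + b} : Finset Uspace) := by
    apply Finset.exists_mem_notMem_of_card_lt_card
    have := Finset.card_le_three (a := a) (b := b) (c := a + b)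
    omega
  simp only [Finset.mem_insert, Finset.mem_singleton, not_or] at hc'
  obtain ⟨hca, hcb, hcab⟩ := hc'
  have h := symForm_add_right c a b
  rw [hform c hc a ha hca, hform c hc b hb hcb, hform c hc _ hmem hcab] at h
  exact absurd h (by decide)

theorem IsPentad.eq_pentadThrough {S : Finset Uspace} (hS : IsPentad S) {a b : Uspace}
    (ha : a ∈ S) (hb : b ∈ S) (hab : a ≠ b) : S = pentadThrough a b := by
  have hform := hS.2.2
  have hsub : S ⊆ pentadThrough a b := by
    intro w hw
    simp only [pentadThrough, Finset.mem_filter, Finset.mem_univ, true_and]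
    by_cases hwa : w = a
    · exact Or.inl hwa
    by_cases hwb : w = b
    · exact Or.inr (Or.inl hwb)
    refine Or.inr (Or.inr ⟨hform a ha w hw (Ne.symm hwa), hform b hb w hw (Ne.symm hwb), ?_⟩)
    rintro rfl
    exact hS.add_notMem ha hb hw
  refine Finset.eq_of_subset_of_card_le hsub ?_
  rw [hS.2.1, (isPentad_pentadThrough a b (hform a ha b hb hab)).2.1]

/-- The collection of all pentads, as an explicitly computable finite set. -/
def allPentads : Finset (Finset Uspace) :=
  (Finset.univ.filter fun p : Uspace × Uspace => symForm p.1 p.2 = 1).image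
    fun p => pentadThrough p.1 p.2

theorem mem_allPentads (S : Finset Uspace) : S ∈ allPentads ↔ IsPentad S := by
  simp only [allPentads, Finset.mem_image, Finset.mem_filter, Finset.mem_univ, true_and]
  constructor
  · rintro ⟨p, hp, rfl⟩
    exact isPentad_pentadThrough _ _ hp
  · intro hS
    obtain ⟨a, ha, b, hb, hab⟩ := Finset.one_lt_card.mp (by rw [hS.2.1]; norm_num : 1 < S.card)
    exact ⟨(a, b), hS.2.2 a ha b hb hab, (hS.eq_pentadThrough ha hb hab).symm⟩

theorem card_allPentads : allPentads.card = 6 := by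
  decide +kernel

/-- There are exactly six pentads in `U`. -/
theorem card_pentads :
    Nat.card {S : Finset Uspace // IsPentad S} = 6 := by
  rw [← card_allPentads]
  exact Nat.subtype_card allPentads mem_allPentads
end

section
/- If S and S' are two distinct pentads in U, then their intersection S ∩ S' has exactly one element. -/
/-- The quadratic form with linear part `c` polarizing to `symForm`. -/
def quad (c x : Uspace) : ZMod 2 :=
  x 0 * x 2 + x 1 * x 3 + c 0 * x 0 + c 1 * x 1 + c 2 * x 2 + c 3 * x 3

/-- The Arf invariant of `quad c`. -/
def arf (c : Uspace) : ZMod 2 :=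
  c 0 * c 2 + c 1 * c 3

/-- The nonzero zeros of `quad c`. -/
def quadric (c : Uspace) : Finset Uspace :=
  Finset.univ.filter fun w => w ≠ 0 ∧ quad c w = 0

lemma card_quadric : ∀ c : Uspace, arf c = 1 → (quadric c).card = 5 := by
  decide +kernel

lemma card_quadric_inter : ∀ c d : Uspace, arf c = 1 → arf d = 1 → c ≠ d →
    (quadric c ∩ quadric d).card = 1 := by
  decide +kernel

/-- The vectors that can lie in a pentad containing `u` and `v` are zeros of one elliptic form. -/
lemma exists_quad_eq_zero : ∀ u v : Uspace, symForm u v = 1 →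
    ∃ c : Uspace, arf c = 1 ∧ quad c u = 0 ∧ quad c v = 0 ∧
      ∀ w, symForm w u = 1 → symForm w v = 1 → w ≠ u + v → quad c w = 0 := by
  decide +kernel

lemma symForm_add_left (u v z : Uspace) :
    symForm (u + v) z = symForm u z + symForm v z := by
  simp only [symForm, Pi.add_apply]
  ring

lemma IsPentad.ne_add {S : Finset Uspace} (hS : IsPentad S) {u v w : Uspace}
    (hu : u ∈ S) (hv : v ∈ S) (hw : w ∈ S) : w ≠ u + v := by
  obtain ⟨-, hcard, hform⟩ := hS
  rintro rfl
  obtain ⟨z, hz, hz'⟩ : ∃ z ∈ S, z ∉ ({u, v, u + v} : Finset Uspace) :=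
    Finset.exists_mem_notMem_of_card_lt_card
      (lt_of_le_of_lt Finset.card_le_three (by omega))
  simp only [Finset.mem_insert, Finset.mem_singleton, not_or] at hz'
  have h := symForm_add_left u v z
  rw [hform _ hw z hz (Ne.symm hz'.2.2), hform u hu z hz (Ne.symm hz'.1),
    hform v hv z hz (Ne.symm hz'.2.1)] at h
  exact absurd h (by decide)

lemma IsPentad.exists_eq_quadric {S : Finset Uspace} (hS : IsPentad S) :
    ∃ c, arf c = 1 ∧ S = quadric c := by
  have ⟨h0, hcard, hform⟩ := hS
  obtain ⟨u, hu, v, hv, huv⟩ := Finset.one_lt_card.mp (show 1 < S.card by omega)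
  obtain ⟨c, hc, hcu, hcv, hcw⟩ := exists_quad_eq_zero u v (hform u hu v hv huv)
  refine ⟨c, hc, Finset.eq_of_subset_of_card_le (fun w hw => ?_) (by rw [card_quadric c hc, hcard])⟩
  refine Finset.mem_filter.mpr ⟨Finset.mem_univ w, fun h => h0 (h ▸ hw), ?_⟩
  by_cases hwu : w = u
  · rwa [hwu]
  by_cases hwv : w = v
  · rwa [hwv]
  exact hcw w (hform w hw u hu hwu) (hform w hw v hv hwv) (hS.ne_add hu hv hw)

/-- Two distinct pentads intersect in exactly one element. -/
theorem pentads_inter_card (S S' : Finset Uspace)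
    (hS : IsPentad S) (hS' : IsPentad S') (hne : S ≠ S') :
    (S ∩ S').card = 1 := by
  obtain ⟨c, hc, rfl⟩ := hS.exists_eq_quadric
  obtain ⟨d, hd, rfl⟩ := hS'.exists_eq_quadric
  exact card_quadric_inter c d hc hd fun h => hne (congrArg quadric h)
end

section
/- The symplectic group Sp(4,𝔽₂), realized in Mathlib as Matrix.symplecticGroup (Fin 2) (ZMod 2), is isomorphic as a group to the symmetric group on six letters, Equiv.Perm (Fin 6). -/
/-!
`Sp(4,𝔽₂)` acts on the quadratic forms on `V = 𝔽₂⁴` whose polarization is the symplectic form `ω`.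
These are the sixteen forms `q_u = q₀ + ω(u, ·)`, where `q₀ = x₀y₀ + x₁y₁`, and six of them are
*odd* (of Arf invariant one): those with `q₀ u = 1`, or equivalently those with exactly six zeros.
The number of zeros is preserved by the action, so `Sp(4,𝔽₂)` permutes the six odd forms.

The action is faithful because the odd forms separate the points of `V`. Its image is the full
symmetric group because it contains every transposition: if `q_u ≠ q_v` are odd and `a = u + v`,
the transvection `x ↦ x + ω(a, x) a` swaps `q_u` and `q_v`, and fixes the other odd forms `q_w`,
since those have `q_w a = 1`.
-/

namespace SpFourTwo

open Matrix

/-- The four-dimensional space over `𝔽₂`; symplectic matrices act on it as row vectors. -/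
abbrev V : Type := Fin 2 ⊕ Fin 2 → ZMod 2

/-- The standard symplectic form, with the signs dropped as the characteristic is two. -/
def omega (x y : V) : ZMod 2 :=
  x (.inl 0) * y (.inr 0) + x (.inl 1) * y (.inr 1) +
    x (.inr 0) * y (.inl 0) + x (.inr 1) * y (.inl 1)

/-- The form `q_u = q₀ + ω(u, ·)`, where `q₀` is the hyperbolic form `x₀y₀ + x₁y₁`. -/
def form (u x : V) : ZMod 2 :=
  x (.inl 0) * x (.inr 0) + x (.inl 1) * x (.inr 1) + omega u x

/-- `q` is a quadratic form polarizing to `ω` and of Arf invariant one; the latter is expressed by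
its having six zeros (the forms of Arf invariant zero have ten). -/
def IsOddForm (q : V → ZMod 2) : Prop :=
  (∀ x y, q (x + y) = q x + q y + omega x y) ∧ Fintype.card {x // q x = 0} = 6

/-- The set of odd quadratic forms. -/
abbrev OddForm : Type := {q : V → ZMod 2 // IsOddForm q}

theorem omega_eq (x y : V) : omega x y = x ⬝ᵥ (J (Fin 2) (ZMod 2) *ᵥ y) := by
  simp [omega, J, dotProduct, mulVec, Fintype.sum_sum_type, Matrix.one_apply,
    ZMod.neg_eq_self_mod_two]
  ring

theorem omega_vecMul {M : Matrix (Fin 2 ⊕ Fin 2) (Fin 2 ⊕ Fin 2) (ZMod 2)}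
    (hM : M ∈ symplecticGroup (Fin 2) (ZMod 2)) (x y : V) :
    omega (x ᵥ* M) (y ᵥ* M) = omega x y := by
  rw [SymplecticGroup.mem_iff] at hM
  conv_rhs => rw [omega_eq, ← hM, ← mulVec_mulVec, ← mulVec_mulVec, mulVec_transpose]
  rw [omega_eq, ← dotProduct_mulVec]

theorem vecMul_bijective (M : symplecticGroup (Fin 2) (ZMod 2)) :
    Function.Bijective fun x : V => x ᵥ* M.1 := by
  have h (A B : symplecticGroup (Fin 2) (ZMod 2)) (hAB : A * B = 1) (x : V) :
      (x ᵥ* A.1) ᵥ* B.1 = x := by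
    rw [vecMul_vecMul, ← Submonoid.coe_mul, hAB, Submonoid.coe_one, vecMul_one]
  exact Function.bijective_iff_has_inverse.2
    ⟨fun x => x ᵥ* (M⁻¹).1, h _ _ (mul_inv_cancel M), h _ _ (inv_mul_cancel M)⟩

/-- `Sp(4,𝔽₂)` acts on odd forms by `(M • q) x = q (x M)`. -/
instance : MulAction (symplecticGroup (Fin 2) (ZMod 2)) OddForm where
  smul M q := ⟨fun x => q.1 (x ᵥ* M.1), fun x y => by
    beta_reduce
    rw [add_vecMul, q.2.1, omega_vecMul M.2], by
    rw [← q.2.2]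
    exact Fintype.card_congr
      ((Equiv.ofBijective _ (vecMul_bijective M)).subtypeEquiv fun x => Iff.rfl)⟩
  one_smul q := Subtype.ext <| funext fun x => congrArg q.1 (vecMul_one x)
  mul_smul M N q := Subtype.ext <| funext fun x => congrArg q.1 (vecMul_vecMul x M.1 N.1).symm

theorem smul_apply (M : symplecticGroup (Fin 2) (ZMod 2)) (q : OddForm) (x : V) :
    (M • q).1 x = q.1 (x ᵥ* M.1) := rfl

theorem form_add (u x y : V) : form u (x + y) = form u x + form u y + omega x y := by
  simp only [form, omega, Pi.add_apply]
  ring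

/-- An odd form `q_u` is one with `q₀ u = 1`. -/
theorem card_zeros_form :
    ∀ u : V, Fintype.card {x // form u x = 0} = 6 ↔ form 0 u = 1 := by
  decide +kernel

theorem isOddForm_form (u : V) : IsOddForm (form u) ↔ form 0 u = 1 :=
  ⟨fun h => (card_zeros_form u).1 h.2, fun h => ⟨form_add u, (card_zeros_form u).2 h⟩⟩

theorem form_injective : Function.Injective form := by
  have h : ∀ u v : V, (∀ x, form u x = form v x) → u = v := by decide +kernel
  exact fun u v huv => h u v (congrFun huv)

/-- `q + q₀` is additive, hence of the form `ω(u, ·)`. -/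
theorem exists_eq_form {q : V → ZMod 2} (hq : IsOddForm q) : ∃ u, form u = q := by
  have two (a : ZMod 2) : a + a = 0 := CharTwo.add_self_eq_zero a
  let l : V →+ ZMod 2 := AddMonoidHom.mk' (fun x => q x + form 0 x) fun x y => by
    rw [hq.1, form_add]
    linear_combination two (omega x y)
  -- Pairing with `u` must give `l` on the basis, so `u` has the values of `l` in swapped order.
  refine ⟨fun i => l (Pi.single i.swap 1), funext fun x => ?_⟩
  have hl : q x + form 0 x = _ := (l.toZModLinearMap 2).pi_apply_eq_sum_univ x
  simp only [Fintype.sum_sum_type, Fin.sum_univ_two, smul_eq_mul,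
    AddMonoidHom.coe_toZModLinearMap] at hl
  have hs (i : Fin 2 ⊕ Fin 2) : (fun j => if i = j then (1 : ZMod 2) else 0) = Pi.single i 1 := by
    ext j
    simp [Pi.single_apply, eq_comm]
  simp only [hs] at hl
  have h0 : form 0 x = x (.inl 0) * x (.inr 0) + x (.inl 1) * x (.inr 1) := by
    simp [form, omega]
  simp only [form, omega, Sum.swap_inl, Sum.swap_inr]
  rw [← h0]
  linear_combination -hl + two (form 0 x)

theorem card_oddForm : Nat.card OddForm = 6 := by
  have e : {u : V // form 0 u = 1} ≃ OddForm :=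
    Equiv.ofBijective (fun u => ⟨form u.1, (isOddForm_form u.1).2 u.2⟩)
      ⟨fun u v h => Subtype.ext (form_injective (congrArg Subtype.val h)), fun ⟨q, hq⟩ => by
        obtain ⟨u, rfl⟩ := exists_eq_form hq
        exact ⟨⟨u, (isOddForm_form u).1 hq⟩, rfl⟩⟩
  rw [← Nat.card_congr e, Nat.card_eq_fintype_card]
  decide +kernel

/-- The odd forms separate the points of `V`. -/
theorem eq_of_form_eq :
    ∀ x y : V, (∀ u, form 0 u = 1 → form u x = form u y) → x = y := by
  decide +kernel

theorem toPermHom_injective :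
    Function.Injective (MulAction.toPermHom (symplecticGroup (Fin 2) (ZMod 2)) OddForm) := by
  rw [injective_iff_map_eq_one]
  intro M hM
  have h (x : V) : x ᵥ* M.1 = x := eq_of_form_eq _ _ fun u hu => by
    have := DFunLike.congr_fun hM ⟨form u, (isOddForm_form u).2 hu⟩
    exact congrFun (congrArg Subtype.val this) x
  refine Subtype.ext (Matrix.ext fun i j => ?_)
  rw [Submonoid.coe_one, one_eq_pi_single, ← h (Pi.single i 1), single_one_vecMul, row_apply]

/-- The matrix of the transvection `x ↦ x + ω(x, a) a` on row vectors. -/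
def transvection (a : V) : Matrix (Fin 2 ⊕ Fin 2) (Fin 2 ⊕ Fin 2) (ZMod 2) :=
  1 + vecMulVec (J (Fin 2) (ZMod 2) *ᵥ a) a

theorem vecMul_transvection (a x : V) : x ᵥ* transvection a = x + omega x a • a := by
  rw [transvection, vecMul_add, vecMul_one, vecMul_vecMulVec, omega_eq]

theorem transvection_mem : ∀ a, transvection a ∈ symplecticGroup (Fin 2) (ZMod 2) := by
  simp only [SymplecticGroup.mem_iff]
  decide +kernel

/-- For odd `q_u`, `q_v`, the transvection along `u + v` takes `q_u` to `q_v`. -/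
theorem form_transvection_left : ∀ u v x : V, form 0 u = 1 → form 0 v = 1 →
    form u (x + omega x (u + v) • (u + v)) = form v x := by
  decide +kernel

/-- For distinct odd `q_u`, `q_v`, `q_w`, the transvection along `u + v` fixes `q_w`. -/
theorem form_transvection_of_ne : ∀ u v w : V, form 0 u = 1 → form 0 v = 1 → form 0 w = 1 →
    u ≠ v → w ≠ u → w ≠ v →
    ∀ x, form w (x + omega x (u + v) • (u + v)) = form w x := by
  decide +kernel

theorem toPermHom_surjective :
    Function.Surjective (MulAction.toPermHom (symplecticGroup (Fin 2) (ZMod 2)) OddForm) := by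
  classical
  have : Finite OddForm := Nat.finite_of_card_ne_zero (by rw [card_oddForm]; decide)
  rw [← MonoidHom.range_eq_top, eq_top_iff, ← Equiv.Perm.closure_isSwap, Subgroup.closure_le]
  rintro _ ⟨⟨p, hp⟩, ⟨q, hq⟩, hpq, rfl⟩
  obtain ⟨u, rfl⟩ := exists_eq_form hp
  obtain ⟨v, rfl⟩ := exists_eq_form hq
  have huv : u ≠ v := by
    rintro rfl
    exact hpq rfl
  have hu := (isOddForm_form u).1 hp
  have hv := (isOddForm_form v).1 hq
  refine ⟨⟨transvection (u + v), transvection_mem _⟩, Equiv.ext fun ⟨r, hr⟩ => ?_⟩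
  obtain ⟨w, rfl⟩ := exists_eq_form hr
  have hw := (isOddForm_form w).1 hr
  rw [MulAction.toPermHom_apply, MulAction.toPerm_apply]
  refine Subtype.ext (funext fun x => ?_)
  rw [smul_apply, vecMul_transvection]
  by_cases hwu : w = u
  · subst hwu
    rw [Equiv.swap_apply_left]
    exact form_transvection_left w v x hu hv
  by_cases hwv : w = v
  · subst hwv
    rw [Equiv.swap_apply_right, add_comm u w]
    exact form_transvection_left w u x hv hu
  · rw [Equiv.swap_apply_of_ne_of_ne
      (fun h => hwu (form_injective (congrArg Subtype.val h)))
      (fun h => hwv (form_injective (congrArg Subtype.val h)))]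
    exact form_transvection_of_ne u v w hu hv hw huv hwu hwv x

end SpFourTwo

/-- The symplectic group `Sp(4,𝔽₂)` is isomorphic to the symmetric group `S₆`. -/
theorem symplecticGroup_iso_perm_fin_six :
    Nonempty (Matrix.symplecticGroup (Fin 2) (ZMod 2) ≃* Equiv.Perm (Fin 6)) := by
  have : Finite SpFourTwo.OddForm :=
    Nat.finite_of_card_ne_zero (by rw [SpFourTwo.card_oddForm]; decide)
  exact ⟨(MulEquiv.ofBijective _
    ⟨SpFourTwo.toPermHom_injective, SpFourTwo.toPermHom_surjective⟩).trans
    (Finite.equivFinOfCardEq SpFourTwo.card_oddForm).permCongrHom⟩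
end

section
/- There is a group isomorphism ψ : Γ₀(4) ≃* Γ(2) given by conjugation with the diagonal matrix diag(2,1): for every A = !![a,b;c,d] ∈ Γ₀(4) one has (ψ A) 0 0 = a, (ψ A) 0 1 = 2·b, 2·((ψ A) 1 0) = c, and (ψ A) 1 1 = d (so ψ A = !![a, 2b; c/2, d]). -/
/-!
Conjugation by `diag(2,1)` sends `!![a, b; c, d]` to `!![a, 2b; c/2, d]`, and its inverse sends
`!![a, b; c, d]` to `!![a, b/2; 2c, d]`. Integrality and membership reduce to divisibility of the
off-diagonal entries: `Γ₀(4)` is the condition `4 ∣ c`, and `Γ(2)` is the condition `2 ∣ b`, `2 ∣ c`,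
since `a * d - b * c = 1` then forces `a` and `d` to be odd (`mem_Gamma_two_iff`).
-/

open scoped MatrixGroups

theorem mem_Gamma0_four_iff (A : SL(2, ℤ)) :
    A ∈ CongruenceSubgroup.Gamma0 4 ↔ (4 : ℤ) ∣ A.1 1 0 := by
  rw [CongruenceSubgroup.Gamma0_mem]
  exact ZMod.intCast_zmod_eq_zero_iff_dvd _ 4

/-- The diagonal congruences in the definition of `Γ(2)` follow from the off-diagonal ones,
because the determinant is odd. -/
theorem mem_Gamma_two_iff (A : SL(2, ℤ)) :
    A ∈ CongruenceSubgroup.Gamma 2 ↔ (2 : ℤ) ∣ A.1 0 1 ∧ (2 : ℤ) ∣ A.1 1 0 := by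
  rw [CongruenceSubgroup.Gamma_mem]
  have h0 : ∀ x : ℤ, (x : ZMod 2) = 0 ↔ (2 : ℤ) ∣ x :=
    fun x => ZMod.intCast_zmod_eq_zero_iff_dvd x 2
  constructor
  · rintro ⟨-, hb, hc, -⟩
    exact ⟨(h0 _).1 hb, (h0 _).1 hc⟩
  · rintro ⟨hb, hc⟩
    have hb' := (h0 _).2 hb
    have hc' := (h0 _).2 hc
    have hdet := A.2
    rw [Matrix.det_fin_two] at hdet
    have hmod := congrArg (Int.cast : ℤ → ZMod 2) hdet
    push_cast at hmod
    rw [hb', zero_mul, sub_zero] at hmod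
    have hunit : ∀ x y : ZMod 2, x * y = 1 → x = 1 ∧ y = 1 := by decide
    exact ⟨(hunit _ _ hmod).1, hb', hc', (hunit _ _ hmod).2⟩

/-- Conjugation by `diag(2,1)`, as a map `Γ₀(4) → Γ(2)`. -/
def conjDiag (A : CongruenceSubgroup.Gamma0 4) : CongruenceSubgroup.Gamma 2 :=
  ⟨⟨!![A.1.1 0 0, 2 * A.1.1 0 1; A.1.1 1 0 / 2, A.1.1 1 1], by
    obtain ⟨k, hk⟩ := (mem_Gamma0_four_iff A.1).1 A.2
    have hdet := A.1.2
    rw [Matrix.det_fin_two] at hdet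
    have h2 : A.1.1 1 0 / 2 = 2 * k := by omega
    rw [Matrix.det_fin_two_of, h2]
    rw [hk] at hdet
    linear_combination hdet⟩, by
    obtain ⟨k, hk⟩ := (mem_Gamma0_four_iff A.1).1 A.2
    refine (mem_Gamma_two_iff _).2 ⟨⟨A.1.1 0 1, rfl⟩, ⟨k, ?_⟩⟩
    change A.1.1 1 0 / 2 = 2 * k
    omega⟩

/-- Conjugation by `diag(2,1)⁻¹`, as a map `Γ(2) → Γ₀(4)`. -/
def conjDiagInv (B : CongruenceSubgroup.Gamma 2) : CongruenceSubgroup.Gamma0 4 :=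
  ⟨⟨!![B.1.1 0 0, B.1.1 0 1 / 2; 2 * B.1.1 1 0, B.1.1 1 1], by
    obtain ⟨k, hk⟩ := ((mem_Gamma_two_iff B.1).1 B.2).1
    have hdet := B.1.2
    rw [Matrix.det_fin_two] at hdet
    have h2 : B.1.1 0 1 / 2 = k := by omega
    rw [Matrix.det_fin_two_of, h2]
    rw [hk] at hdet
    linear_combination hdet⟩, by
    obtain ⟨k, hk⟩ := ((mem_Gamma_two_iff B.1).1 B.2).2
    refine (mem_Gamma0_four_iff _).2 ⟨k, ?_⟩
    change 2 * B.1.1 1 0 = 4 * k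
    omega⟩

theorem two_mul_conjDiag (A : CongruenceSubgroup.Gamma0 4) :
    2 * (conjDiag A).1.1 1 0 = A.1.1 1 0 := by
  obtain ⟨k, hk⟩ := (mem_Gamma0_four_iff A.1).1 A.2
  change 2 * (A.1.1 1 0 / 2) = A.1.1 1 0
  omega

theorem conjDiag_mul (A B : CongruenceSubgroup.Gamma0 4) :
    conjDiag (A * B) = conjDiag A * conjDiag B := by
  have hA := two_mul_conjDiag A
  have hB := two_mul_conjDiag B
  have hAB := two_mul_conjDiag (A * B)
  have hmul : ∀ i j, (A * B).1.1 i j = A.1.1 i 0 * B.1.1 0 j + A.1.1 i 1 * B.1.1 1 j :=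
    fun i j => by
      change (A.1.1 * B.1.1) i j = _
      rw [Matrix.mul_apply, Fin.sum_univ_two]
  have hmul' : ∀ i j, (conjDiag A * conjDiag B).1.1 i j
      = (conjDiag A).1.1 i 0 * (conjDiag B).1.1 0 j
        + (conjDiag A).1.1 i 1 * (conjDiag B).1.1 1 j :=
    fun i j => by
      change ((conjDiag A).1.1 * (conjDiag B).1.1) i j = _
      rw [Matrix.mul_apply, Fin.sum_univ_two]
  have h00 : ∀ C, (conjDiag C).1.1 0 0 = C.1.1 0 0 := fun _ => rfl
  have h01 : ∀ C, (conjDiag C).1.1 0 1 = 2 * C.1.1 0 1 := fun _ => rfl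
  have h11 : ∀ C, (conjDiag C).1.1 1 1 = C.1.1 1 1 := fun _ => rfl
  apply Subtype.ext
  apply Subtype.ext
  ext i j
  rw [hmul']
  fin_cases i <;> fin_cases j <;> simp only [Fin.zero_eta, Fin.mk_one, Fin.isValue]
  · rw [h00, h00, h00, h01, hmul]
    linear_combination -A.1.1 0 1 * hB
  · rw [h01, h00, h01, h01, h11, hmul]
    ring
  · rw [hmul] at hAB
    rw [h00, h11]
    -- The lower-left entries are only known after doubling.
    have h2 : (2 : ℤ) ≠ 0 := two_ne_zero
    apply mul_left_cancel₀ h2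
    linear_combination hAB - B.1.1 0 0 * hA - A.1.1 1 1 * hB
  · rw [h11, h01, h11, h11, hmul]
    linear_combination -B.1.1 0 1 * hA

/-- Conjugation by `diag(2,1)`, as a group isomorphism `Γ₀(4) ≃* Γ(2)`. -/
def conjDiagEquiv : CongruenceSubgroup.Gamma0 4 ≃* CongruenceSubgroup.Gamma 2 where
  toFun := conjDiag
  invFun := conjDiagInv
  left_inv A := by
    apply Subtype.ext
    apply Subtype.ext
    ext i j
    fin_cases i <;> fin_cases j
    · rfl
    · change 2 * A.1.1 0 1 / 2 = A.1.1 0 1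
      omega
    · exact two_mul_conjDiag A
    · rfl
  right_inv B := by
    obtain ⟨k, hk⟩ := ((mem_Gamma_two_iff B.1).1 B.2).1
    apply Subtype.ext
    apply Subtype.ext
    ext i j
    fin_cases i <;> fin_cases j
    · rfl
    · change 2 * (B.1.1 0 1 / 2) = B.1.1 0 1
      omega
    · change 2 * B.1.1 1 0 / 2 = B.1.1 1 0
      omega
    · rfl
  map_mul' := conjDiag_mul

/-- The congruence subgroups `Γ₀(4)` and `Γ(2)` of `SL(2,ℤ)` are isomorphic via
conjugation by `diag(2,1)`: the matrix `!![a,b;c,d] ∈ Γ₀(4)` is sent to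
`!![a, 2b; c/2, d] ∈ Γ(2)`. -/
theorem gamma0_four_iso_gamma_two :
    ∃ ψ : CongruenceSubgroup.Gamma0 4 ≃* CongruenceSubgroup.Gamma 2,
      ∀ A : CongruenceSubgroup.Gamma0 4,
        (((ψ A : SL(2, ℤ)) : Matrix (Fin 2) (Fin 2) ℤ) 0 0
            = ((A : SL(2, ℤ)) : Matrix (Fin 2) (Fin 2) ℤ) 0 0) ∧
        (((ψ A : SL(2, ℤ)) : Matrix (Fin 2) (Fin 2) ℤ) 0 1
            = 2 * ((A : SL(2, ℤ)) : Matrix (Fin 2) (Fin 2) ℤ) 0 1) ∧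
        (2 * ((ψ A : SL(2, ℤ)) : Matrix (Fin 2) (Fin 2) ℤ) 1 0
            = ((A : SL(2, ℤ)) : Matrix (Fin 2) (Fin 2) ℤ) 1 0) ∧
        (((ψ A : SL(2, ℤ)) : Matrix (Fin 2) (Fin 2) ℤ) 1 1
            = ((A : SL(2, ℤ)) : Matrix (Fin 2) (Fin 2) ℤ) 1 1) :=
  ⟨conjDiagEquiv, fun A => ⟨rfl, rfl, two_mul_conjDiag A, rfl⟩⟩
end
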